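/- arXiv:2307.04069 — 2 statements merged into one kernel-verified Lean document; each statement's English description precedes it below -/
import Mathlib

section
/- Let C ∈ S^{n×n} have eigenvalues ω₁ ≥ ω₂ ≥ … ≥ ωₙ (in descending order). Then inf{ ⟨C, X⟩ : X ∈ S_λ(A,b) } = inf{ Σ_{i=1}^{n} ωᵢ λ_{n+1−i} : λ ∈ Λ(A,b) }, where Λ(A,b) := {λ ∈ ℝⁿ : Aλ ≤ b, λ₁ ≥ … ≥ λₙ} and ⟨C, X⟩ := Tr(Cᵀ X). -/
open Matrix

/-- The vector of eigenvalues of a real symmetric matrix, in descending order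
(junk value `0` if the matrix is not symmetric). -/
noncomputable def eigs {n : ℕ} (X : Matrix (Fin n) (Fin n) ℝ) : Fin n → ℝ :=
  if hX : X.IsHermitian then
    fun i => (hX.eigenvalues ∘ Tuple.sort hX.eigenvalues) i.rev
  else fun _ => 0

/-- The eigenvalue constraint set `S_λ(A,b) = {X ∈ S^{n×n} : A λ(X) ≤ b}`. -/
def SLambda {m n : ℕ} (A : Matrix (Fin m) (Fin n) ℝ) (b : Fin m → ℝ) :
    Set (Matrix (Fin n) (Fin n) ℝ) :=
  {X | X.IsHermitian ∧ ∀ i, A.mulVec (eigs X) i ≤ b i}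

/-- The polyhedron `Λ(A,b) = {λ ∈ ℝⁿ : Aλ ≤ b, λ₁ ≥ … ≥ λₙ}`. -/
def LambdaSet {m n : ℕ} (A : Matrix (Fin m) (Fin n) ℝ) (b : Fin m → ℝ) :
    Set (Fin n → ℝ) :=
  {l | (∀ i, A.mulVec l i ≤ b i) ∧ Antitone l}

/-!
Write `X = U Diag(μ) Uᵀ` with `U` orthogonal. Then `⟨C, X⟩ = ωᵀ (Q ⊙ Q) μ` for the orthogonal matrix
`Q = Pᵀ U`, and `Q ⊙ Q` is doubly stochastic. By Birkhoff's theorem this value is a convex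
combination of the sums `∑ i, ω i * μ (σ i)` over permutations `σ`, and by the rearrangement
inequality each of these is at least the sum pairing `ω` in descending with `μ` in ascending order.
For every `l ∈ Λ(A,b)` the bound is attained by the matrix `P Diag(lₙ, …, l₁) Pᵀ ∈ S_λ(A,b)`.
-/

section TraceInequality

variable {k m n R : Type*} [Fintype k] [Fintype m] [Fintype n] [DecidableEq m] [DecidableEq n]

theorem trace_transpose_conj_diagonal_mul_conj_diagonal [CommSemiring R]
    (P : Matrix k m R) (U : Matrix k n R) (ω : m → R) (μ : n → R) :
    ((P * diagonal ω * Pᵀ)ᵀ * (U * diagonal μ * Uᵀ)).trace =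
      ω ⬝ᵥ ((Pᵀ * U) ⊙ (Pᵀ * U)) *ᵥ μ := by
  calc ((P * diagonal ω * Pᵀ)ᵀ * (U * diagonal μ * Uᵀ)).trace
      = (P * (diagonal ω * (Pᵀ * U) * diagonal μ * Uᵀ)).trace := by
        simp only [transpose_mul, transpose_transpose, diagonal_transpose, Matrix.mul_assoc]
    _ = (diagonal ω * (Pᵀ * U) * (Pᵀ * U * diagonal μ)ᵀ).trace := by
        rw [trace_mul_comm]
        simp only [transpose_mul, transpose_transpose, diagonal_transpose, Matrix.mul_assoc]
    _ = ω ⬝ᵥ ((Pᵀ * U) ⊙ (Pᵀ * U)) *ᵥ μ := by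
        rw [← dotProduct_vecMul_hadamard, dotProduct_mulVec]

theorem hadamard_self_mem_doublyStochastic [CommRing R] [LinearOrder R] [IsStrictOrderedRing R]
    {Q : Matrix n n R} (hQ : Qᵀ * Q = 1) : Q ⊙ Q ∈ doublyStochastic R n := by
  have hQ' : Q * Qᵀ = 1 := mul_eq_one_comm.mp hQ
  refine mem_doublyStochastic_iff_sum.mpr ⟨fun i j => mul_self_nonneg (Q i j), fun i => ?_,
    fun j => ?_⟩
  · simpa [Matrix.mul_apply] using congrFun₂ hQ' i i
  · simpa [Matrix.mul_apply] using congrFun₂ hQ j j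

theorem dotProduct_comp_perm_le_dotProduct_mulVec [Field R] [LinearOrder R] [IsStrictOrderedRing R]
    {M : Matrix n n R} (hM : M ∈ doublyStochastic R n) {ω μ : n → R} {σ : Equiv.Perm n}
    (hωμ : Antivary ω (μ ∘ σ)) : ω ⬝ᵥ (μ ∘ σ) ≤ ω ⬝ᵥ M *ᵥ μ := by
  obtain ⟨w, hw_nonneg, hw_sum, rfl⟩ := exists_eq_sum_perm_of_mem_doublyStochastic hM
  have rearrangement (τ : Equiv.Perm n) : ω ⬝ᵥ (μ ∘ σ) ≤ ω ⬝ᵥ (μ ∘ τ) := by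
    simpa [dotProduct] using hωμ.sum_mul_le_sum_mul_comp_perm (σ := τ.trans σ.symm)
  calc ω ⬝ᵥ (μ ∘ σ) = ∑ τ, w τ * (ω ⬝ᵥ (μ ∘ σ)) := by rw [← Finset.sum_mul, hw_sum, one_mul]
    _ ≤ ∑ τ, w τ * (ω ⬝ᵥ (μ ∘ τ)) :=
        Finset.sum_le_sum fun τ _ => mul_le_mul_of_nonneg_left (rearrangement τ) (hw_nonneg τ)
    _ = ω ⬝ᵥ (∑ τ, w τ • τ.permMatrix R) *ᵥ μ := by
        simp only [sum_mulVec, smul_mulVec, permMatrix_mulVec, dotProduct_sum, dotProduct_smul,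
          smul_eq_mul]

theorem dotProduct_comp_perm_le_trace [Field R] [LinearOrder R] [IsStrictOrderedRing R]
    {P U : Matrix n n R} (hP : Pᵀ * P = 1) (hU : Uᵀ * U = 1) {ω μ : n → R} {σ : Equiv.Perm n}
    (hωμ : Antivary ω (μ ∘ σ)) :
    ω ⬝ᵥ (μ ∘ σ) ≤ ((P * diagonal ω * Pᵀ)ᵀ * (U * diagonal μ * Uᵀ)).trace := by
  have hQ : (Pᵀ * U)ᵀ * (Pᵀ * U) = 1 := by
    rw [transpose_mul, transpose_transpose, Matrix.mul_assoc, ← Matrix.mul_assoc P,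
      mul_eq_one_comm.mp hP, Matrix.one_mul, hU]
  rw [trace_transpose_conj_diagonal_mul_conj_diagonal]
  exact dotProduct_comp_perm_le_dotProduct_mulVec (hadamard_self_mem_doublyStochastic hQ) hωμ

theorem trace_transpose_conj_diagonal_mul_conj_diagonal_self [CommSemiring R]
    {P : Matrix k n R} (hP : Pᵀ * P = 1) (ω μ : n → R) :
    ((P * diagonal ω * Pᵀ)ᵀ * (P * diagonal μ * Pᵀ)).trace = ω ⬝ᵥ μ := by
  rw [trace_transpose_conj_diagonal_mul_conj_diagonal, hP,
    one_hadamard_eq_one_iff.mpr diag_one, one_mulVec]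

end TraceInequality

section OrderedEigenvalues

theorem eq_of_antitone_of_map_univ_val_eq {α : Type*} [PartialOrder α] {n : ℕ} {f g : Fin n → α}
    (hf : Antitone f) (hg : Antitone g)
    (h : Finset.univ.val.map f = Finset.univ.val.map g) : f = g := by
  rw [Fin.univ_val_map, Fin.univ_val_map, Multiset.coe_eq_coe] at h
  exact List.ofFn_injective
    (h.eq_of_pairwise' hf.sortedGE_ofFn.pairwise hg.sortedGE_ofFn.pairwise)

theorem map_comp_perm_univ_val {ι α : Type*} [Fintype ι] (f : ι → α) (σ : Equiv.Perm ι) :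
    Finset.univ.val.map (f ∘ σ) = Finset.univ.val.map f := by
  rw [← Multiset.map_map, Multiset.map_univ_val_equiv]

theorem roots_charpoly_diagonal {ι R : Type*} [Fintype ι] [DecidableEq ι] [CommRing R] [IsDomain R]
    (d : ι → R) : (diagonal d).charpoly.roots = Finset.univ.val.map d := by
  rw [charpoly_diagonal, Finset.prod_eq_multiset_prod]
  simpa only [Multiset.map_map, Function.comp_def] using
    Polynomial.roots_multiset_prod_X_sub_C (Finset.univ.val.map d)

theorem isHermitian_conj_diagonal {k m : Type*} [Fintype m] [DecidableEq m]
    (P : Matrix k m ℝ) (d : m → ℝ) : (P * diagonal d * Pᵀ).IsHermitian :=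
  isHermitian_mul_mul_conjTranspose P (isHermitian_diagonal d)

theorem exists_eq_conj_diagonal_eigenvalues {ι : Type*} [Fintype ι] [DecidableEq ι]
    {X : Matrix ι ι ℝ} (hX : X.IsHermitian) :
    ∃ U : Matrix ι ι ℝ, Uᵀ * U = 1 ∧ X = U * diagonal hX.eigenvalues * Uᵀ := by
  refine ⟨hX.eigenvectorUnitary, Unitary.coe_star_mul_self hX.eigenvectorUnitary, ?_⟩
  exact hX.spectral_theorem.trans (Unitary.conjStarAlgAut_apply _ _)

variable {n : ℕ} {X P : Matrix (Fin n) (Fin n) ℝ} {l : Fin n → ℝ}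

theorem eigs_comp_rev (hX : X.IsHermitian) :
    eigs X ∘ Fin.rev = hX.eigenvalues ∘ Tuple.sort hX.eigenvalues := by
  funext i
  simp only [eigs, dif_pos hX, Function.comp_apply, Fin.rev_rev]

theorem antitone_eigs (hX : X.IsHermitian) : Antitone (eigs X) := by
  have hmono : Monotone (eigs X ∘ Fin.rev) := eigs_comp_rev hX ▸ Tuple.monotone_sort _
  simpa [Function.comp_def] using hmono.comp_antitone Fin.rev_anti

theorem map_eigs_univ_val (hX : X.IsHermitian) :
    Finset.univ.val.map (eigs X) = X.charpoly.roots := by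
  calc Finset.univ.val.map (eigs X)
      = Finset.univ.val.map (eigs X ∘ Fin.rev) := (map_comp_perm_univ_val _ Fin.revPerm).symm
    _ = Finset.univ.val.map hX.eigenvalues := by rw [eigs_comp_rev hX, map_comp_perm_univ_val]
    _ = X.charpoly.roots := hX.roots_charpoly_eq_eigenvalues.symm

theorem eigs_conj_diagonal_comp_perm (hP : Pᵀ * P = 1) (hl : Antitone l)
    (σ : Equiv.Perm (Fin n)) : eigs (P * diagonal (l ∘ σ) * Pᵀ) = l := by
  have hX := isHermitian_conj_diagonal P (l ∘ σ)
  refine eq_of_antitone_of_map_univ_val_eq (antitone_eigs hX) hl ?_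
  rw [map_eigs_univ_val hX, charpoly_mul_comm, ← Matrix.mul_assoc, hP, Matrix.one_mul,
    roots_charpoly_diagonal, map_comp_perm_univ_val]

theorem dotProduct_eigs_comp_rev_le_trace (hP : Pᵀ * P = 1) {ω : Fin n → ℝ} (hω : Antitone ω)
    (hX : X.IsHermitian) :
    ω ⬝ᵥ (eigs X ∘ Fin.rev) ≤ ((P * diagonal ω * Pᵀ)ᵀ * X).trace := by
  obtain ⟨U, hU, hXU⟩ := exists_eq_conj_diagonal_eigenvalues hX
  rw [eigs_comp_rev hX]
  conv_rhs => rw [hXU]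
  exact dotProduct_comp_perm_le_trace hP hU (hω.antivary (Tuple.monotone_sort _))

end OrderedEigenvalues

section FeasibleSets

variable {m n : ℕ} {A : Matrix (Fin m) (Fin n) ℝ} {b : Fin m → ℝ}

theorem eigs_mem_LambdaSet {X : Matrix (Fin n) (Fin n) ℝ} (hX : X ∈ SLambda A b) :
    eigs X ∈ LambdaSet A b :=
  ⟨hX.2, antitone_eigs hX.1⟩

theorem conj_diagonal_comp_perm_mem_SLambda {P : Matrix (Fin n) (Fin n) ℝ} (hP : Pᵀ * P = 1)
    {l : Fin n → ℝ} (hl : l ∈ LambdaSet A b) (σ : Equiv.Perm (Fin n)) :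
    P * diagonal (l ∘ σ) * Pᵀ ∈ SLambda A b := by
  refine ⟨isHermitian_conj_diagonal P (l ∘ σ), ?_⟩
  rw [eigs_conj_diagonal_comp_perm hP hl.2]
  exact hl.1

end FeasibleSets

/-- For a symmetric matrix `C` with descending eigenvalues `ω` (i.e. `C = P Diag(ω) Pᵀ`
with `P` orthogonal and `ω` descending),
`inf{⟨C,X⟩ : X ∈ S_λ(A,b)} = inf{Σᵢ ωᵢ λ_{n+1−i} : λ ∈ Λ(A,b)}`. -/
theorem statement7 {m n : ℕ} (A : Matrix (Fin m) (Fin n) ℝ) (b : Fin m → ℝ)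
    (C P : Matrix (Fin n) (Fin n) ℝ) (ω : Fin n → ℝ)
    (hP : Pᵀ * P = 1) (hP' : P * Pᵀ = 1)
    (hω : Antitone ω)
    (hC : C = P * Matrix.diagonal ω * Pᵀ) :
    sInf {r | ∃ X ∈ SLambda A b, r = (Cᵀ * X).trace} =
    sInf {r | ∃ l ∈ LambdaSet A b, r = ∑ i : Fin n, ω i * l i.rev} := by
  subst hC
  apply csInf_eq_csInf_of_forall_exists_le
  · rintro _ ⟨X, hX, rfl⟩
    exact ⟨_, ⟨eigs X, eigs_mem_LambdaSet hX, rfl⟩, dotProduct_eigs_comp_rev_le_trace hP hω hX.1⟩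
  · rintro _ ⟨l, hl, rfl⟩
    exact ⟨_, ⟨_, conj_diagonal_comp_perm_mem_SLambda hP hl Fin.revPerm, rfl⟩,
      (trace_transpose_conj_diagonal_mul_conj_diagonal_self hP ω (l ∘ Fin.revPerm)).le⟩
end

section
/- Let Y ∈ ℝ^{n×n} with (1/2)(Y + Yᵀ) = P Ω Pᵀ, P orthogonal, Ω = Diag(ω₁,…,ωₙ), ω₁ ≤ … ≤ ωₙ, and set ω̄ := (ωₙ,…,ω₁) ∈ ℝⁿ. Assume Λ(A,b) := {λ ∈ ℝⁿ : Aλ ≤ b, λ₁ ≥ … ≥ λₙ} is nonempty, and let Proj_Λ(ω̄) denote the (unique) Euclidean projection of ω̄ onto the closed convex set Λ(A,b). Then inf{ (1/2)‖X − Y‖_F² : X ∈ S_λ(A,b) } = (1/2)( ‖Proj_Λ(ω̄) − ω̄‖₂² + ‖Y‖_F² − ‖ω̄‖₂² ). -/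
open Matrix

/-- The squared Frobenius norm of a real square matrix. -/
def frobSq {n : ℕ} (M : Matrix (Fin n) (Fin n) ℝ) : ℝ :=
  ∑ i, ∑ j, (M i j) ^ 2

/-!
For symmetric `X` and `S = (Y + Yᵀ) / 2`, the matrix `X - S` is symmetric and `Y - S` is
skew-symmetric, so `‖X - Y‖² = ‖X - S‖² + ‖Y‖² - ‖S‖²` and only the distance from `X` to `S`
matters. If `X = U Diag(d) Uᵀ` and `S = V Diag(e) Vᵀ`, then
`‖X - S‖² = ∑ᵢⱼ (Uᵀ V)ᵢⱼ² (dᵢ - eⱼ)²`, an average of `(dᵢ - eⱼ)²` with doubly stochastic weights.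
By Birkhoff's theorem and the rearrangement inequality it is at least `‖λ(X) - λ(S)‖²`
(Hoffman–Wielandt), hence at least the squared distance from `λ(S)` to the admissible spectra.
Equality is attained by the matrix with the projected spectrum and the eigenvectors of `S`.
-/

section DoublyStochastic

variable {ι R : Type*} [Fintype ι] [LinearOrder R]

theorem sum_sub_sq_le_sum_sub_comp_perm_sq [CommRing R] [IsStrictOrderedRing R] {f g : ι → R}
    (hfg : Monovary f g) (σ : Equiv.Perm ι) :
    ∑ i, (f i - g i) ^ 2 ≤ ∑ i, (f i - g (σ i)) ^ 2 := by
  have rearrangement : ∑ i, f i * g (σ i) ≤ ∑ i, f i * g i := hfg.sum_mul_comp_perm_le_sum_mul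
  have sum_sq_comp : ∑ i, g (σ i) ^ 2 = ∑ i, g i ^ 2 := Equiv.sum_comp σ (g · ^ 2)
  simp only [sub_sq, Finset.sum_add_distrib, Finset.sum_sub_distrib, mul_assoc, ← Finset.mul_sum,
    sum_sq_comp]
  linarith

variable [DecidableEq ι]

theorem of_sq_mem_doublyStochastic [CommRing R] [IsStrictOrderedRing R] {Q : Matrix ι ι R}
    (hQ : Qᵀ * Q = 1) :
    (of fun i j => Q i j ^ 2) ∈ doublyStochastic R ι := by
  have hQ' : Q * Qᵀ = 1 := mul_eq_one_comm.1 hQ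
  refine mem_doublyStochastic_iff_sum.2 ⟨fun i j => sq_nonneg (Q i j), fun i => ?_, fun j => ?_⟩
  · simpa [mul_apply, sq] using congr_fun₂ hQ' i i
  · simpa [mul_apply, sq] using congr_fun₂ hQ j j

variable [Field R] [IsStrictOrderedRing R]

theorem exists_perm_sum_le_of_mem_doublyStochastic {M : Matrix ι ι R}
    (hM : M ∈ doublyStochastic R ι) (c : ι → ι → R) :
    ∃ σ : Equiv.Perm ι, ∑ i, c i (σ i) ≤ ∑ i, ∑ j, M i j * c i j := by
  let cost : Matrix ι ι R →ₗ[R] R :=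
    { toFun := fun N => ∑ i, ∑ j, N i j * c i j
      map_add' := fun N N' => by simp only [Matrix.add_apply, add_mul, Finset.sum_add_distrib]
      map_smul' := fun a N => by
        simp only [Matrix.smul_apply, smul_eq_mul, mul_assoc, Finset.mul_sum, RingHom.id_apply] }
  rw [← SetLike.mem_coe, doublyStochastic_eq_convexHull_permMatrix] at hM
  obtain ⟨_, ⟨σ, rfl⟩, hσ⟩ :=
    (cost.concaveOn convex_univ).exists_le_of_mem_convexHull (Set.subset_univ _) hM
  have cost_permMatrix : cost (σ.permMatrix R) = ∑ i, c i (σ i) := by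
    simp [cost, Equiv.Perm.permMatrix, PEquiv.toMatrix_apply]
  exact ⟨σ, cost_permMatrix ▸ hσ⟩

theorem sum_sub_sq_le_of_mem_doublyStochastic {M : Matrix ι ι R}
    (hM : M ∈ doublyStochastic R ι) {f g : ι → R} (hfg : Monovary f g) :
    ∑ i, (f i - g i) ^ 2 ≤ ∑ i, ∑ j, M i j * (f i - g j) ^ 2 := by
  obtain ⟨σ, hσ⟩ :=
    exists_perm_sum_le_of_mem_doublyStochastic hM fun i j => (f i - g j) ^ 2
  exact (sum_sub_sq_le_sum_sub_comp_perm_sq hfg σ).trans hσ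

end DoublyStochastic

section OrthogonalConjugation

variable {ι R : Type*} [Fintype ι] [DecidableEq ι] [CommRing R]

theorem isHermitian_conj_diagonal_s9 [StarRing R] [TrivialStar R] (U : Matrix ι ι R) (d : ι → R) :
    (U * diagonal d * Uᵀ).IsHermitian := by
  simp [isHermitian_iff_isSymm, IsSymm, Matrix.mul_assoc]

theorem roots_charpoly_conj_diagonal [IsDomain R] {U : Matrix ι ι R}
    (hU : Uᵀ * U = 1) (d : ι → R) :
    (U * diagonal d * Uᵀ).charpoly.roots = Finset.univ.val.map d := by
  rw [charpoly_mul_comm, ← Matrix.mul_assoc, hU, Matrix.one_mul, charpoly_diagonal]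
  simpa using Polynomial.roots_multiset_prod_X_sub_C (Finset.univ.val.map d)

theorem exists_orthogonal_conj_diagonal_comp_perm {U : Matrix ι ι R} (hU : Uᵀ * U = 1)
    (d : ι → R) (σ : Equiv.Perm ι) :
    ∃ V : Matrix ι ι R, Vᵀ * V = 1 ∧ V * diagonal (d ∘ σ) * Vᵀ = U * diagonal d * Uᵀ := by
  refine ⟨U.submatrix id σ, ?_, ?_⟩
  · rw [transpose_submatrix, ← submatrix_mul _ _ _ _ _ Function.bijective_id, hU,
      submatrix_one_equiv]
  · rw [← submatrix_diagonal_equiv, transpose_submatrix, submatrix_mul_equiv,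
      submatrix_mul_equiv, submatrix_id_id]

end OrthogonalConjugation

section FrobeniusNorm

variable {n : ℕ}

theorem frobSq_eq_trace (M : Matrix (Fin n) (Fin n) ℝ) : frobSq M = (M * Mᵀ).trace := by
  simp [frobSq, trace, mul_apply, sq]

theorem frobSq_neg (M : Matrix (Fin n) (Fin n) ℝ) : frobSq (-M) = frobSq M := by
  simp [frobSq]

theorem frobSq_diagonal (d : Fin n → ℝ) : frobSq (diagonal d) = ∑ i, d i ^ 2 := by
  simp [frobSq, diagonal_apply, ite_pow]

theorem frobSq_add_of_isSymm_of_transpose_eq_neg {S K : Matrix (Fin n) (Fin n) ℝ} (hS : S.IsSymm)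
    (hK : Kᵀ = -K) : frobSq (S + K) = frobSq S + frobSq K := by
  have trace_mul_eq_zero : (K * S).trace = 0 := by
    have : (K * S).trace = -(K * S).trace := by
      conv_lhs => rw [← trace_transpose, transpose_mul, hS.eq, hK, Matrix.mul_neg, trace_neg,
        trace_mul_comm]
    linarith
  simp only [frobSq_eq_trace, transpose_add, hS.eq, hK, Matrix.add_mul, Matrix.mul_add,
    Matrix.mul_neg, trace_add, trace_neg, trace_mul_comm S K, trace_mul_eq_zero]
  ring

theorem frobSq_sub_eq_of_isSymm {X : Matrix (Fin n) (Fin n) ℝ} (hX : X.IsSymm)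
    (Y : Matrix (Fin n) (Fin n) ℝ) :
    frobSq (X - Y) = frobSq (X - (1 / 2 : ℝ) • (Y + Yᵀ)) + frobSq Y -
      frobSq ((1 / 2 : ℝ) • (Y + Yᵀ)) := by
  set S := (1 / 2 : ℝ) • (Y + Yᵀ) with hS_def
  have hS : S.IsSymm := by simp [IsSymm, hS_def, add_comm]
  have hYS : (Y - S)ᵀ = -(Y - S) := by
    rw [transpose_sub, hS.eq, hS_def]
    module
  have hSY : (S - Y)ᵀ = -(S - Y) := by rw [← neg_sub Y S, transpose_neg, hYS]
  have norm_Y : frobSq Y = frobSq S + frobSq (Y - S) := by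
    rw [← frobSq_add_of_isSymm_of_transpose_eq_neg hS hYS, add_sub_cancel]
  have norm_X_sub_Y : frobSq (X - Y) = frobSq (X - S) + frobSq (S - Y) := by
    rw [← frobSq_add_of_isSymm_of_transpose_eq_neg (hX.sub hS) hSY, sub_add_sub_cancel]
  rw [norm_X_sub_Y, norm_Y, ← frobSq_neg (S - Y), neg_sub]
  ring

theorem frobSq_orthogonal_mul_mul_transpose {U V : Matrix (Fin n) (Fin n) ℝ} (hU : Uᵀ * U = 1)
    (hV : Vᵀ * V = 1) (M : Matrix (Fin n) (Fin n) ℝ) : frobSq (U * M * Vᵀ) = frobSq M := by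
  calc frobSq (U * M * Vᵀ)
      = (U * (M * (Vᵀ * V) * Mᵀ * Uᵀ)).trace := by
        simp only [frobSq_eq_trace, transpose_mul, transpose_transpose, Matrix.mul_assoc]
    _ = (M * Mᵀ * (Uᵀ * U)).trace := by
        rw [trace_mul_comm, hV, Matrix.mul_one, Matrix.mul_assoc]
    _ = frobSq M := by rw [hU, Matrix.mul_one, frobSq_eq_trace]

theorem frobSq_conj_diagonal {U : Matrix (Fin n) (Fin n) ℝ} (hU : Uᵀ * U = 1)
    (d : Fin n → ℝ) : frobSq (U * diagonal d * Uᵀ) = ∑ i, d i ^ 2 := by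
  rw [frobSq_orthogonal_mul_mul_transpose hU hU, frobSq_diagonal]

theorem frobSq_conj_diagonal_sub_conj_diagonal {U V : Matrix (Fin n) (Fin n) ℝ}
    (hU : Uᵀ * U = 1) (hV : Vᵀ * V = 1) (d e : Fin n → ℝ) :
    frobSq (U * diagonal d * Uᵀ - V * diagonal e * Vᵀ) =
      ∑ i, ∑ j, (Uᵀ * V) i j ^ 2 * (d i - e j) ^ 2 := by
  have factorization : U * diagonal d * Uᵀ - V * diagonal e * Vᵀ =
      U * (diagonal d * (Uᵀ * V) - Uᵀ * V * diagonal e) * Vᵀ := by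
    have hU' : U * Uᵀ = 1 := mul_eq_one_comm.1 hU
    have hV' : V * Vᵀ = 1 := mul_eq_one_comm.1 hV
    simp only [Matrix.mul_sub, Matrix.sub_mul, Matrix.mul_assoc, hV', Matrix.mul_one]
    simp only [← Matrix.mul_assoc, hU', Matrix.one_mul]
  rw [factorization, frobSq_orthogonal_mul_mul_transpose hU hV, frobSq]
  refine Finset.sum_congr rfl fun i _ => Finset.sum_congr rfl fun j _ => ?_
  rw [Matrix.sub_apply, diagonal_mul, mul_diagonal]
  ring

end FrobeniusNorm

section OrderedEigenvalues

variable {n : ℕ}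

theorem eq_of_antitone_of_map_univ_eq {α : Type*} [PartialOrder α] {f g : Fin n → α}
    (hf : Antitone f) (hg : Antitone g)
    (hfg : Finset.univ.val.map f = Finset.univ.val.map g) : f = g := by
  have hperm : (List.ofFn f).Perm (List.ofFn g) := by
    simpa only [Fin.univ_val_map, Multiset.coe_eq_coe] using hfg
  exact List.ofFn_injective
    (hperm.eq_of_pairwise' hf.sortedGE_ofFn.pairwise hg.sortedGE_ofFn.pairwise)

theorem eigs_eq_eigenvalues_comp {X : Matrix (Fin n) (Fin n) ℝ} (hX : X.IsHermitian) :
    eigs X = hX.eigenvalues ∘ (Fin.revPerm.trans (Tuple.sort hX.eigenvalues)) :=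
  dif_pos hX

theorem antitone_eigs_s9 (X : Matrix (Fin n) (Fin n) ℝ) : Antitone (eigs X) := by
  by_cases hX : X.IsHermitian
  · rw [eigs_eq_eigenvalues_comp hX]
    exact (Tuple.monotone_sort hX.eigenvalues).comp_antitone Fin.rev_anti
  · rw [eigs, dif_neg hX]
    exact antitone_const

theorem exists_orthogonal_conj_diagonal_eigs {X : Matrix (Fin n) (Fin n) ℝ}
    (hX : X.IsHermitian) :
    ∃ U : Matrix (Fin n) (Fin n) ℝ, Uᵀ * U = 1 ∧ U * diagonal (eigs X) * Uᵀ = X := by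
  let V : Matrix (Fin n) (Fin n) ℝ := hX.eigenvectorUnitary
  have hV : Vᵀ * V = 1 := Unitary.coe_star_mul_self hX.eigenvectorUnitary
  have hVX : V * diagonal hX.eigenvalues * Vᵀ = X := hX.spectral_theorem.symm
  rw [eigs_eq_eigenvalues_comp hX]
  obtain ⟨U, hU, hUV⟩ := exists_orthogonal_conj_diagonal_comp_perm hV hX.eigenvalues
    (Fin.revPerm.trans (Tuple.sort hX.eigenvalues))
  exact ⟨U, hU, hUV.trans hVX⟩

theorem eigs_conj_diagonal {U : Matrix (Fin n) (Fin n) ℝ} (hU : Uᵀ * U = 1) {d : Fin n → ℝ}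
    (hd : Antitone d) : eigs (U * diagonal d * Uᵀ) = d := by
  obtain ⟨V, hV, hVU⟩ :=
    exists_orthogonal_conj_diagonal_eigs (isHermitian_conj_diagonal_s9 U d)
  refine eq_of_antitone_of_map_univ_eq (antitone_eigs_s9 _) hd ?_
  rw [← roots_charpoly_conj_diagonal hV, hVU, roots_charpoly_conj_diagonal hU]

theorem sum_eigs_sub_eigs_sq_le_frobSq_sub {X Z : Matrix (Fin n) (Fin n) ℝ}
    (hX : X.IsHermitian) (hZ : Z.IsHermitian) :
    ∑ i, (eigs X i - eigs Z i) ^ 2 ≤ frobSq (X - Z) := by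
  obtain ⟨U, hU, hUX⟩ := exists_orthogonal_conj_diagonal_eigs hX
  obtain ⟨V, hV, hVZ⟩ := exists_orthogonal_conj_diagonal_eigs hZ
  have hUV : (Uᵀ * V)ᵀ * (Uᵀ * V) = 1 := by
    rw [transpose_mul, transpose_transpose, Matrix.mul_assoc, ← Matrix.mul_assoc U,
      mul_eq_one_comm.1 hU, Matrix.one_mul, hV]
  calc ∑ i, (eigs X i - eigs Z i) ^ 2
      ≤ ∑ i, ∑ j, (Uᵀ * V) i j ^ 2 * (eigs X i - eigs Z j) ^ 2 := by
        simpa only [of_apply] using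
          sum_sub_sq_le_of_mem_doublyStochastic (of_sq_mem_doublyStochastic hUV)
            ((antitone_eigs_s9 X).monovary (antitone_eigs_s9 Z))
    _ = frobSq (X - Z) := by
        rw [← frobSq_conj_diagonal_sub_conj_diagonal hU hV, hUX, hVZ]

end OrderedEigenvalues

theorem statement9_general {n : ℕ} (C : Set (Fin n → ℝ))
    (Y P : Matrix (Fin n) (Fin n) ℝ) (ω : Fin n → ℝ) (hP : Pᵀ * P = 1) (hω : Monotone ω)
    (hdecomp : (1 / 2 : ℝ) • (Y + Yᵀ) = P * diagonal ω * Pᵀ)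
    (proj : Fin n → ℝ) (hprojmem : proj ∈ C) (hproj_anti : Antitone proj)
    (hproj : ∀ q ∈ C, Antitone q →
      ∑ i, (proj i - ω i.rev) ^ 2 ≤ ∑ i, (q i - ω i.rev) ^ 2) :
    IsLeast {r | ∃ X, (X.IsHermitian ∧ eigs X ∈ C) ∧ r = (1 / 2 : ℝ) * frobSq (X - Y)}
      ((1 / 2 : ℝ) * ((∑ i, (proj i - ω i.rev) ^ 2) + frobSq Y - ∑ i, ω i ^ 2)) := by
  obtain ⟨Q, hQ, hQP⟩ := exists_orthogonal_conj_diagonal_comp_perm hP ω Fin.revPerm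
  have hω_rev : Antitone (ω ∘ Fin.revPerm) := hω.comp_antitone Fin.rev_anti
  have pythagoras {X : Matrix (Fin n) (Fin n) ℝ} (hX : X.IsHermitian) :
      frobSq (X - Y) =
        frobSq (X - Q * diagonal (ω ∘ Fin.revPerm) * Qᵀ) + frobSq Y - ∑ i, ω i ^ 2 := by
    rw [frobSq_sub_eq_of_isSymm (isHermitian_iff_isSymm.1 hX), hdecomp,
      frobSq_conj_diagonal hP, hQP]
  constructor
  · refine ⟨Q * diagonal proj * Qᵀ, ⟨isHermitian_conj_diagonal_s9 Q proj, ?_⟩, ?_⟩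
    · rwa [eigs_conj_diagonal hQ hproj_anti]
    · rw [pythagoras (isHermitian_conj_diagonal_s9 Q proj), ← Matrix.sub_mul, ← Matrix.mul_sub,
        diagonal_sub, frobSq_conj_diagonal hQ]
      rfl
  · rintro _ ⟨X, ⟨hX, hXC⟩, rfl⟩
    have spectral_distance_le := sum_eigs_sub_eigs_sq_le_frobSq_sub hX
      (isHermitian_conj_diagonal_s9 Q (ω ∘ Fin.revPerm))
    rw [eigs_conj_diagonal hQ hω_rev] at spectral_distance_le
    rw [pythagoras hX]
    gcongr
    exact (hproj _ hXC (antitone_eigs_s9 X)).trans spectral_distance_le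

/-- Value of the projection problem: if `(1/2)(Y + Yᵀ) = P Diag(ω) Pᵀ` with `P`
orthogonal and `ω` ascending, `ω̄ = (ωₙ,…,ω₁)`, `Λ(A,b)` is nonempty and `proj` is the
Euclidean projection of `ω̄` onto `Λ(A,b)`, then
`inf{(1/2)‖X − Y‖_F² : X ∈ S_λ(A,b)} = (1/2)(‖proj − ω̄‖² + ‖Y‖_F² − ‖ω̄‖²)`. -/
theorem statement9 {m n : ℕ} (A : Matrix (Fin m) (Fin n) ℝ) (b : Fin m → ℝ)
    (Y P : Matrix (Fin n) (Fin n) ℝ) (ω : Fin n → ℝ)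
    (hP : Pᵀ * P = 1) (hP' : P * Pᵀ = 1)
    (hω : Monotone ω)
    (hdecomp : (1 / 2 : ℝ) • (Y + Yᵀ) = P * Matrix.diagonal ω * Pᵀ)
    (hne : (LambdaSet A b).Nonempty)
    (proj : Fin n → ℝ)
    (hprojmem : proj ∈ LambdaSet A b)
    (hproj : ∀ q ∈ LambdaSet A b,
      ∑ i : Fin n, (proj i - ω i.rev) ^ 2 ≤ ∑ i : Fin n, (q i - ω i.rev) ^ 2) :
    sInf {r | ∃ X ∈ SLambda A b, r = (1 / 2 : ℝ) * frobSq (X - Y)} =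
    (1 / 2 : ℝ) * ((∑ i : Fin n, (proj i - ω i.rev) ^ 2) + frobSq Y -
      ∑ i : Fin n, (ω i) ^ 2) :=
  (statement9_general {l | ∀ i, A.mulVec l i ≤ b i} Y P ω hP hω hdecomp proj hprojmem.1
    hprojmem.2 fun q hqC hq => hproj q ⟨hqC, hq⟩).csInf_eq
end
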